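/- Let d ≥ 2 be an integer and let ℓ, p ≥ 0 be integers. Then for every real r, the monomial r^{ℓ+2p} expands in the radial Zernike polynomials as r^{ℓ+2p} = Σ_{k=0}^{p} χ_{ℓ,k,p} · R_{ℓ,k}(r), where χ_{ℓ,k,p} = (√(2ℓ+4k+d) / (2p+2ℓ+2k+d)) · binom(p,k) · k! / ∏_{j=1}^{k} (p+ℓ+k−j+d/2), with the empty product (for k = 0) equal to 1. -/

import Mathlib

/-!
Put `a = ℓ + d/2` and write `(x)_k = x (x+1) ⋯ (x+k-1)`. Up to the factor `√(2ℓ+4k+d) / k!`, the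
polynomial `R_{ℓ,k}(r)` is `r^ℓ` times a shifted Jacobi polynomial in `r²`, so the claim is the
expansion of `X^p` in shifted Jacobi polynomials. The coefficient of `X^m` on the right-hand side is
`∑_k (-1)^{k+m} (a+2k) C(p,k) C(k,m) (a+m)_k / (a+p)_{k+1}`.
Multiplied by `p - m`, this sum telescopes to `0`, so the coefficient vanishes for `m ≠ p`. For
`m = p` only the term `k = p` survives, and it equals `1`.
-/

open Finset

/-- The radial Zernike polynomial `R_{ℓ,k}` in dimension `d`. -/
noncomputable def zernikeR (d ℓ k : ℕ) (r : ℝ) : ℝ :=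
  Real.sqrt (2 * ℓ + 4 * k + d) *
    ∑ s ∈ Finset.range (k + 1),
      (-1 : ℝ) ^ s * (k.choose s : ℝ) * ((k.factorial : ℝ))⁻¹ *
        (∏ j ∈ Finset.Icc 1 k, ((ℓ : ℝ) + 2 * k - s - j + d / 2)) *
        r ^ (ℓ + 2 * (k - s))

/-- The expansion coefficient `χ_{ℓ,k,p}` of the monomial `r^{ℓ+2p}` in the radial
Zernike polynomials. -/
noncomputable def zernikeChi (d ℓ k p : ℕ) : ℝ :=
  Real.sqrt (2 * ℓ + 4 * k + d) / (2 * p + 2 * ℓ + 2 * k + d) * (p.choose k : ℝ) *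
    (k.factorial : ℝ) / ∏ j ∈ Finset.Icc 1 k, ((p : ℝ) + ℓ + k - j + d / 2)

open Polynomial

section

variable {R : Type*} [CommRing R]

lemma natCast_choose_succ_mul (n k : ℕ) :
    (n.choose (k + 1) : R) * (k + 1) = n.choose k * (n - k) := by
  have h := congrArg (Nat.cast (R := R)) (Nat.add_one_mul_choose_eq n k)
  rw [Nat.choose_succ_succ'] at h
  push_cast at h
  linear_combination -h

lemma natCast_succ_choose_mul (n k : ℕ) :
    ((n + 1).choose k : R) * (n + 1 - k) = n.choose k * (n + 1) := by
  have h := natCast_choose_succ_mul (R := R) (n + 1) k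
  have h' := congrArg (Nat.cast (R := R)) (Nat.add_one_mul_choose_eq n k)
  push_cast at h h'
  linear_combination -h - h'

lemma prod_Icc_add_sub_eq_ascPochhammer_eval (x : R) (k : ℕ) :
    ∏ j ∈ Icc 1 k, (x + k - j) = (ascPochhammer R k).eval x := by
  calc ∏ j ∈ Icc 1 k, (x + k - j)
      = ∏ j ∈ range k, (x + k - 1 - j) := by
        rw [← Ico_add_one_right_eq_Icc, prod_Ico_eq_prod_range]
        exact prod_congr rfl fun j _ => by push_cast; ring
    _ = (ascPochhammer R k).eval x := by
        rw [← descPochhammer_eval_eq_prod_range, descPochhammer_eval_eq_ascPochhammer]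
        ring_nf

/-- The shifted Jacobi polynomial `k! · P_k^{(0, a-1)}(2X - 1)`, orthogonal on `[0, 1]` for the
weight `x^{a-1}`. The factor `k!` clears denominators, so that `a` may lie in any commutative
ring. -/
noncomputable def shiftedJacobi (a : R) (k : ℕ) : R[X] :=
  ∑ m ∈ range (k + 1),
    C ((-1) ^ (k + m) * (k.choose m : R) * (ascPochhammer R k).eval (a + m)) * X ^ m

lemma coeff_shiftedJacobi (a : R) (k m : ℕ) :
    (shiftedJacobi a k).coeff m =
      (-1) ^ (k + m) * (k.choose m : R) * (ascPochhammer R k).eval (a + m) := by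
  simp only [shiftedJacobi, finsetSum_coeff, coeff_C_mul_X_pow]
  rw [sum_ite_eq, ite_eq_left_iff]
  intro hm
  rw [Nat.choose_eq_zero_of_lt (by simpa using hm)]
  simp

end

section

variable {K : Type*} [Field K]

/-- The connection coefficient of `X ^ p` at `shiftedJacobi a k`; it equals `0` for `k > p`. -/
noncomputable def connectionCoeff (a : K) (p k : ℕ) : K :=
  (a + 2 * k) * p.choose k / (ascPochhammer K (k + 1)).eval (a + p)

lemma sub_mul_sum_connectionCoeff_mul_coeff (a : K) (p m : ℕ) {n : ℕ}
    (hn : (ascPochhammer K n).eval (a + p) ≠ 0) :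
    (p - m) * ∑ k ∈ range n, connectionCoeff a p k * (shiftedJacobi a k).coeff m =
      (-1) ^ (n + m) * (m - n) * (p.choose n : K) * (n.choose m : K) *
        (ascPochhammer K n).eval (a + m) / (ascPochhammer K n).eval (a + p) := by
  induction n with
  | zero => cases m <;> simp
  | succ n ih =>
    rw [ascPochhammer_succ_eval] at hn
    obtain ⟨hprod, hlast⟩ := mul_ne_zero_iff.mp hn
    have hp := natCast_choose_succ_mul (R := K) p n
    have hm := natCast_succ_choose_mul (R := K) n m
    have hchoose : (n + 1 - m) * ((p.choose (n + 1) : K) * (n + 1).choose m) =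
        (p - n) * (p.choose n * n.choose m) := by
      linear_combination (p.choose (n + 1) : K) * hm + (n.choose m : K) * hp
    rw [sum_range_succ, mul_add, ih hprod, connectionCoeff, coeff_shiftedJacobi,
      ascPochhammer_succ_eval, ascPochhammer_succ_eval]
    field_simp
    push_cast
    -- The terms in `p.choose n * n.choose m` match since
    -- `(p - n) (a + m + n) + (n - m) (a + p + n) = (p - m) (a + 2 n)`.
    linear_combination
      -(-1) ^ (n + m) * (ascPochhammer K n).eval (a + m) * (a + m + n) * hchoose

lemma sum_connectionCoeff_mul_coeff_of_ne [CharZero K] {a : K} {p m : ℕ}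
    (ha : (ascPochhammer K (p + 1)).eval (a + p) ≠ 0) (hm : m ≠ p) :
    ∑ k ∈ range (p + 1), connectionCoeff a p k * (shiftedJacobi a k).coeff m = 0 := by
  have hpm : (p : K) - m ≠ 0 := sub_ne_zero.mpr (Nat.cast_injective.ne hm.symm)
  apply (mul_eq_zero_iff_left hpm).mp
  rw [sub_mul_sum_connectionCoeff_mul_coeff a p m ha, Nat.choose_succ_self]
  simp

lemma sum_connectionCoeff_mul_coeff_self {a : K} {p : ℕ}
    (ha : (ascPochhammer K (p + 1)).eval (a + p) ≠ 0) :
    ∑ k ∈ range (p + 1), connectionCoeff a p k * (shiftedJacobi a k).coeff p = 1 := by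
  have hlower : ∑ k ∈ range p, connectionCoeff a p k * (shiftedJacobi a k).coeff p = 0 :=
    sum_eq_zero fun k hk => by
      simp [coeff_shiftedJacobi, Nat.choose_eq_zero_of_lt (mem_range.mp hk)]
  have htop : (ascPochhammer K (p + 1)).eval (a + p) =
      (a + 2 * p) * (ascPochhammer K p).eval (a + p) := by
    rw [ascPochhammer_succ_eval]
    ring
  rw [sum_range_succ, hlower, zero_add, connectionCoeff, coeff_shiftedJacobi, Nat.choose_self,
    Even.neg_one_pow ⟨p, rfl⟩, Nat.cast_one, mul_one, one_mul, one_mul, div_mul_eq_mul_div, ← htop,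
    div_self ha]

theorem X_pow_eq_sum_connectionCoeff_mul_shiftedJacobi [CharZero K] {a : K} {p : ℕ}
    (ha : (ascPochhammer K (p + 1)).eval (a + p) ≠ 0) :
    (X ^ p : K[X]) = ∑ k ∈ range (p + 1), C (connectionCoeff a p k) * shiftedJacobi a k := by
  ext m
  simp only [finsetSum_coeff, coeff_C_mul, coeff_X_pow]
  split_ifs with hm
  · rw [hm, sum_connectionCoeff_mul_coeff_self ha]
  · rw [sum_connectionCoeff_mul_coeff_of_ne ha hm]

end

lemma zernikeR_eq_shiftedJacobi_eval (d ℓ k : ℕ) (r : ℝ) :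
    zernikeR d ℓ k r =
      √(2 * ℓ + 4 * k + d) / k.factorial * r ^ ℓ *
        (shiftedJacobi (ℓ + d / 2 : ℝ) k).eval (r ^ 2) := by
  rw [zernikeR, shiftedJacobi, eval_finsetSum, ← sum_flip, mul_sum, mul_sum]
  refine sum_congr rfl fun m hm => ?_
  obtain ⟨s, rfl⟩ := Nat.exists_eq_add_of_le (mem_range_succ_iff.mp hm)
  have hprod : ∏ j ∈ Icc 1 (m + s), ((ℓ : ℝ) + 2 * (m + s : ℕ) - s - j + d / 2) =
      (ascPochhammer ℝ (m + s)).eval (ℓ + d / 2 + m : ℝ) := by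
    rw [← prod_Icc_add_sub_eq_ascPochhammer_eval]
    exact prod_congr rfl fun j _ => by push_cast; ring
  have hsign : (-1 : ℝ) ^ (m + s + m) = (-1) ^ s := by
    rw [add_right_comm, pow_add, Even.neg_one_pow ⟨m, rfl⟩, one_mul]
  rw [Nat.add_sub_cancel_left, hprod, ← Nat.choose_symm_add, Nat.add_sub_cancel]
  simp only [eval_mul, eval_C, eval_pow, eval_X, hsign]
  ring

lemma zernikeChi_mul_sqrt_div_factorial (d ℓ k p : ℕ) :
    zernikeChi d ℓ k p * (√(2 * ℓ + 4 * k + d) / k.factorial) =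
      connectionCoeff (ℓ + d / 2 : ℝ) p k := by
  have hprod : ∏ j ∈ Icc 1 k, ((p : ℝ) + ℓ + k - j + d / 2) =
      (ascPochhammer ℝ k).eval (ℓ + d / 2 + p : ℝ) := by
    rw [← prod_Icc_add_sub_eq_ascPochhammer_eval]
    exact prod_congr rfl fun j _ => by ring
  have hsqrt : √(2 * ℓ + 4 * k + d : ℝ) ^ 2 = 2 * (ℓ + d / 2 + 2 * k) := by
    rw [Real.sq_sqrt (by positivity)]
    ring
  have hlast : (2 * p + 2 * ℓ + 2 * k + d : ℝ) = 2 * (ℓ + d / 2 + p + k) := by ring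
  rw [zernikeChi, connectionCoeff, hprod, ascPochhammer_succ_eval, hlast]
  field_simp
  rw [hsqrt]
  ring

theorem monomial_zernikeR_expansion_general (d ℓ p : ℕ) (h : 0 < d + ℓ + p) (r : ℝ) :
    r ^ (ℓ + 2 * p) = ∑ k ∈ range (p + 1), zernikeChi d ℓ k p * zernikeR d ℓ k r := by
  have hpos : (0 : ℝ) < ℓ + d / 2 + p := by
    have hsum : (0 : ℝ) < d + ℓ + p := by exact_mod_cast h
    have hnonneg : (0 : ℝ) ≤ ℓ + p := by positivity
    linarith only [hsum, hnonneg]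
  have ha := (ascPochhammer_pos (p + 1) (ℓ + d / 2 + p : ℝ) hpos).ne'
  calc r ^ (ℓ + 2 * p)
      = r ^ ℓ * (X ^ p : ℝ[X]).eval (r ^ 2) := by rw [eval_pow, eval_X, pow_add, pow_mul]
    _ = ∑ k ∈ range (p + 1), r ^ ℓ * (connectionCoeff (ℓ + d / 2 : ℝ) p k *
          (shiftedJacobi (ℓ + d / 2 : ℝ) k).eval (r ^ 2)) := by
        rw [X_pow_eq_sum_connectionCoeff_mul_shiftedJacobi ha, eval_finsetSum, mul_sum]
        simp only [eval_mul, eval_C]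
    _ = ∑ k ∈ range (p + 1), zernikeChi d ℓ k p * zernikeR d ℓ k r :=
        sum_congr rfl fun k _ => by
          rw [zernikeR_eq_shiftedJacobi_eval, ← zernikeChi_mul_sqrt_div_factorial]
          ring

/-- The monomial `r^{ℓ+2p}` expands in the radial Zernike polynomials
as `r^{ℓ+2p} = Σ_{k=0}^p χ_{ℓ,k,p} R_{ℓ,k}(r)`. -/
theorem monomial_zernikeR_expansion (d ℓ p : ℕ) (hd : 2 ≤ d) :
    ∀ r : ℝ, r ^ (ℓ + 2 * p) =
      ∑ k ∈ Finset.range (p + 1), zernikeChi d ℓ k p * zernikeR d ℓ k r :=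
  monomial_zernikeR_expansion_general d ℓ p (by omega)
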